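/- Fix a point x ∈ T and an integer k ≥ 1. Then there exist constants C > 0 and ρ ∈ (0, 1) such that for all integers N ≥ k: |E[D_k(N)] − (1/√π) · (Γ(k + 1/2)/Γ(k)) · (Γ(N + 1)/Γ(N + 3/2))| ≤ C·ρ^N. In particular, on the flat torus the k-dependence and N-dependence of the expected k-th nearest-neighbor distance separate to all orders in 1/N. -/

import Mathlib

open MeasureTheory Filter

noncomputable section

/-- The `k`-th smallest value (1-indexed) among the `N` real numbers `f 0, …, f (N-1)`. -/
def kthVal {N : ℕ} (k : ℕ) (f : Fin N → ℝ) : ℝ :=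
  (((Finset.univ : Finset (Fin N)).val.map f).sort (· ≤ ·)).getD (k - 1) 0

/-- The integer lattice `ℤ² ⊂ ℝ²` (with the Euclidean norm). -/
def TorusLattice : AddSubgroup (EuclideanSpace ℝ (Fin 2)) where
  carrier := {v | ∀ i, ∃ m : ℤ, v i = (m : ℝ)}
  zero_mem' := fun i => ⟨0, by simp⟩
  add_mem' := by
    rintro a b ha hb i
    obtain ⟨m, hm⟩ := ha i
    obtain ⟨m', hm'⟩ := hb i
    exact ⟨m + m', by simp [PiLp.add_apply, hm, hm']⟩
  neg_mem' := by
    rintro a ha i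
    obtain ⟨m, hm⟩ := ha i
    exact ⟨-m, by simp [PiLp.neg_apply, hm]⟩

/-- The flat unit torus `ℝ²/ℤ²`, carrying the quotient (semi)norm, whose induced distance is
`d(x, y) = min {‖x̃ − ỹ + m‖ : m ∈ ℤ²}` with `‖·‖` the Euclidean norm. -/
abbrev Torus := EuclideanSpace ℝ (Fin 2) ⧸ TorusLattice

instance : MeasurableSpace Torus := borel _
instance : BorelSpace Torus := ⟨rfl⟩

/-- The Haar probability measure on the flat unit torus: the pushforward of Lebesgue measure
on the unit square `[0,1)²` under the quotient map. -/
def torusMeasure : Measure Torus :=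
  Measure.map (QuotientAddGroup.mk' TorusLattice)
    (volume.restrict {v : EuclideanSpace ℝ (Fin 2) | ∀ i, v i ∈ Set.Ico (0:ℝ) 1})

lemma countable_lattice : Countable TorusLattice := by
  have : ∀ v : TorusLattice, ∃ m : Fin 2 → ℤ, ∀ i, (v : EuclideanSpace ℝ (Fin 2)) i = m i := by
    intro v
    choose m hm using v.2
    exact ⟨m, hm⟩
  choose f hf using this
  refine Function.Injective.countable (f := f) ?_
  intro a b hab
  ext i
  rw [hf, hf, hab]

/-- Half-open unit square with lower corner `a`. -/
def unitBox (a : EuclideanSpace ℝ (Fin 2)) : Set (EuclideanSpace ℝ (Fin 2)) :=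
  {v | ∀ i, v i ∈ Set.Ico (a i) (a i + 1)}

lemma unitBox_eq (a : EuclideanSpace ℝ (Fin 2)) :
    unitBox a = (WithLp.ofLp : EuclideanSpace ℝ (Fin 2) → (Fin 2 → ℝ)) ⁻¹'
      (Set.univ.pi fun i => Set.Ico (a i) (a i + 1)) := by
  ext v; simp [unitBox]

lemma measurableSet_unitBox (a : EuclideanSpace ℝ (Fin 2)) : MeasurableSet (unitBox a) := by
  rw [unitBox_eq]
  exact (PiLp.volume_preserving_ofLp (Fin 2)).measurable
    (MeasurableSet.univ_pi fun i => measurableSet_Ico)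

lemma volume_unitBox (a : EuclideanSpace ℝ (Fin 2)) : volume (unitBox a) = 1 := by
  rw [unitBox_eq, (PiLp.volume_preserving_ofLp (Fin 2)).measure_preimage
    (MeasurableSet.univ_pi fun i => measurableSet_Ico).nullMeasurableSet, Real.volume_pi_Ico]
  simp

lemma fundDom_unitBox (a : EuclideanSpace ℝ (Fin 2)) :
    IsAddFundamentalDomain TorusLattice (unitBox a) volume := by
  refine IsAddFundamentalDomain.mk' (measurableSet_unitBox a).nullMeasurableSet ?_
  intro v
  have h := fun i => existsUnique_add_zsmul_mem_Ico (zero_lt_one (α := ℝ)) (v i) (a i)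
  choose m hm hu using h
  refine ⟨⟨WithLp.toLp 2 (fun i => (m i : ℝ)), fun i => ⟨m i, rfl⟩⟩, ?_, ?_⟩
  · intro i
    have := hm i
    simp only [zsmul_eq_mul, mul_one] at this
    simpa [AddSubgroup.vadd_def, add_comm] using this
  · rintro ⟨g, hg⟩ hgv
    ext i
    obtain ⟨n, hn⟩ := hg i
    have h1 := hu i n ?_
    · simp [hn, h1]
    · have := hgv i
      simpa [AddSubgroup.vadd_def, add_comm, hn] using this

lemma torusMeasure_eq : torusMeasure =
    Measure.map (QuotientAddGroup.mk' TorusLattice) (volume.restrict (unitBox 0)) := by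
  simp [torusMeasure, unitBox]

lemma measurable_mkTorus : Measurable (QuotientAddGroup.mk' TorusLattice) := by
  have : Continuous (QuotientAddGroup.mk' TorusLattice) := continuous_quot_mk
  exact this.measurable

instance : IsProbabilityMeasure torusMeasure := by
  rw [torusMeasure_eq]
  have : IsProbabilityMeasure ((volume : Measure (EuclideanSpace ℝ (Fin 2))).restrict (unitBox 0)) :=
    ⟨by simp [volume_unitBox]⟩
  exact Measure.isProbabilityMeasure_map measurable_mkTorus.aemeasurable

lemma measurable_distTorus (x : Torus) : Measurable (fun y : Torus => dist x y) := by
  have : Continuous (fun y : Torus => dist x y) := by fun_prop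
  exact this.measurable

lemma exists_box_rep (x : Torus) (a : EuclideanSpace ℝ (Fin 2)) :
    ∃ v ∈ unitBox a, (QuotientAddGroup.mk' TorusLattice) v = x := by
  obtain ⟨w, rfl⟩ := QuotientAddGroup.mk'_surjective TorusLattice x
  have h := fun i => existsUnique_add_zsmul_mem_Ico (zero_lt_one (α := ℝ)) (w i) (a i)
  choose m hm hu using h
  refine ⟨w + WithLp.toLp 2 (fun i => (m i : ℝ)), ?_, ?_⟩
  · intro i
    have := hm i
    simpa using this
  · symm
    rw [QuotientAddGroup.mk'_apply, QuotientAddGroup.mk'_apply, QuotientAddGroup.eq]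
    intro i
    exact ⟨m i, by simp⟩

lemma dist_mk_le (v w : EuclideanSpace ℝ (Fin 2)) :
    dist (QuotientAddGroup.mk' TorusLattice v) (QuotientAddGroup.mk' TorusLattice w) ≤ dist v w := by
  rw [dist_eq_norm, dist_eq_norm, ← map_sub]
  exact QuotientAddGroup.norm_mk_le_norm

lemma dist_torus_le (x y : Torus) : dist x y ≤ 2 := by
  obtain ⟨v, hv, rfl⟩ := exists_box_rep x 0
  obtain ⟨w, hw, rfl⟩ := exists_box_rep y 0
  refine (dist_mk_le v w).trans ?_
  rw [EuclideanSpace.dist_eq, Fin.sum_univ_two, Real.dist_eq, Real.dist_eq, sq_abs, sq_abs]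
  rw [Real.sqrt_le_left (by norm_num)]
  have h := hv 0; have h' := hv 1; have g := hw 0; have g' := hw 1
  simp at h h' g g'
  nlinarith

lemma dist_mk_le_iff {v w : EuclideanSpace ℝ (Fin 2)} {r : ℝ} (hr : r < 1/2)
    (h : ∀ i, |v i - w i| ≤ 1/2) :
    dist (QuotientAddGroup.mk' TorusLattice v) (QuotientAddGroup.mk' TorusLattice w) ≤ r ↔
      dist v w ≤ r := by
  refine ⟨fun hd => ?_, fun hd => (dist_mk_le v w).trans hd⟩
  refine le_of_forall_gt_imp_ge_of_dense fun s' hs' => ?_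
  obtain ⟨s, hs1, hs2⟩ := exists_between (lt_min hs' hr)
  rw [lt_min_iff] at hs2
  have h1 := lt_of_le_of_lt hd hs1
  rw [dist_eq_norm, ← map_sub] at h1
  obtain ⟨m, hm, hms⟩ := QuotientAddGroup.norm_lt_iff.1 h1
  have : m = v - w := by
    rw [QuotientAddGroup.mk'_apply, QuotientAddGroup.eq] at hm
    ext i
    obtain ⟨n, hn⟩ := hm i
    have h3 : |m i| < 1/2 := by
      have := PiLp.norm_apply_le m i
      rw [Real.norm_eq_abs] at this
      linarith
    have h4 := h i
    simp only [PiLp.add_apply, PiLp.neg_apply, PiLp.sub_apply] at hn ⊢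
    have : |(n:ℝ)| < 1 := by
      rw [← hn, abs_lt]; rw [abs_lt] at h3; rw [abs_le] at h4
      constructor <;> linarith
    have h5 : |n| < 1 := by exact_mod_cast this
    rw [Int.abs_lt_one_iff] at h5
    rw [h5] at hn
    push_cast at hn
    linarith
  rw [dist_eq_norm, ← this]
  linarith

lemma torusMeasure_ball (x : Torus) {r : ℝ} (h0 : 0 ≤ r) (hr : r < 1/2) :
    torusMeasure.real {y | dist x y ≤ r} = Real.pi * r ^ 2 := by
  have := countable_lattice
  obtain ⟨v, rfl⟩ := QuotientAddGroup.mk'_surjective TorusLattice x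
  have hms : MeasurableSet {y | dist (QuotientAddGroup.mk' TorusLattice v) y ≤ r} :=
    measurableSet_le (measurable_distTorus _) measurable_const
  let a : EuclideanSpace ℝ (Fin 2) := WithLp.toLp 2 (fun i => v i - 1/2)
  have key : torusMeasure {y | dist (QuotientAddGroup.mk' TorusLattice v) y ≤ r} =
      volume (Metric.closedBall v r) := by
    rw [torusMeasure_eq, Measure.map_apply measurable_mkTorus hms,
      Measure.restrict_apply (measurable_mkTorus hms),
      (fundDom_unitBox 0).measure_set_eq (fundDom_unitBox a) (measurable_mkTorus hms)]
    · congr 1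
      ext w
      simp only [Set.mem_inter_iff, Set.mem_preimage, Set.mem_ofPred_eq, Metric.mem_closedBall]
      constructor
      · rintro ⟨h1, h2⟩
        rw [dist_comm]
        refine (dist_mk_le_iff hr fun i => ?_).1 h1
        have := h2 i
        simp [a] at this
        rw [abs_le]; constructor <;> linarith
      · intro h
        rw [dist_comm] at h
        refine ⟨(dist_mk_le v w).trans h, fun i => ?_⟩
        have h3 := PiLp.norm_apply_le (v - w) i
        rw [← dist_eq_norm, Real.norm_eq_abs, PiLp.sub_apply] at h3
        have h4 := lt_of_le_of_lt (h3.trans h) hr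
        rw [abs_lt] at h4
        simp only [a, Set.mem_Ico]
        constructor <;> linarith
    · intro g
      ext w
      have : (QuotientAddGroup.mk' TorusLattice) (g +ᵥ w) = (QuotientAddGroup.mk' TorusLattice) w := by
        rw [QuotientAddGroup.mk'_apply, QuotientAddGroup.mk'_apply, eq_comm, QuotientAddGroup.eq]
        rw [AddSubgroup.vadd_def, vadd_eq_add, add_comm, add_neg_cancel_right]
        exact g.2
      simp only [Set.mem_preimage, Set.mem_ofPred_eq, this]
  rw [measureReal_def, key, EuclideanSpace.volume_closedBall_fin_two, ← ENNReal.ofReal_pow h0,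
    ← ENNReal.ofReal_mul (by positivity), ENNReal.toReal_ofReal (by positivity)]
  ring

/-- `P(Bin(N,p) < k)`. -/
def binTail (k N : ℕ) (p : ℝ) : ℝ :=
  ∑ j ∈ Finset.range k, (N.choose j : ℝ) * p ^ j * (1 - p) ^ (N - j)

lemma binTail_nonneg (k N : ℕ) {p : ℝ} (h0 : 0 ≤ p) (h1 : p ≤ 1) : 0 ≤ binTail k N p := by
  have : 0 ≤ 1 - p := by linarith
  unfold binTail
  positivity

lemma binTail_le (k N : ℕ) (hN : k ≤ N) {p : ℝ} (h0 : 3/4 ≤ p) (h1 : p ≤ 1) :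
    binTail k N p ≤ 2 ^ k * (5/8) ^ N := by
  have hq : 0 ≤ 1 - p := by linarith
  have h2 : (p/2 + (1-p)) ^ N ≤ (5/8) ^ N := by
    apply pow_le_pow_left₀ <;> linarith
  refine le_trans ?_ (mul_le_mul_of_nonneg_left h2 (by positivity))
  rw [add_pow, Finset.mul_sum, binTail]
  refine (Finset.sum_le_sum (g := fun j =>
    2 ^ k * ((p / 2) ^ j * (1 - p) ^ (N - j) * (N.choose j))) ?_).trans ?_
  · intro j hj
    have hj := (Finset.mem_range.1 hj).le
    have e : (2:ℝ) ^ k * ((p / 2) ^ j * (1 - p) ^ (N - j) * (N.choose j)) =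
       2 ^ (k - j) * ((N.choose j : ℝ) * p ^ j * (1 - p) ^ (N - j)) := by
      obtain ⟨d, rfl⟩ := Nat.exists_eq_add_of_le hj
      rw [Nat.add_sub_cancel_left, pow_add, div_pow]
      field_simp
    rw [e]
    refine le_mul_of_one_le_left (by positivity) (one_le_pow₀ (by norm_num))
  · apply Finset.sum_le_sum_of_subset_of_nonneg
    · intro j; simp; omega
    · intros; positivity

lemma betaSq (n : ℕ) : ∀ j : ℕ, ∫ s in (0:ℝ)..1, (s^2) ^ j * (1 - s^2) ^ n =
    Real.Gamma (j + 1/2) * n.factorial / (2 * Real.Gamma (j + n + 3/2)) := by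
  induction n with
  | zero =>
    intro j
    have : Real.Gamma (j + 3/2) = (j + 1/2) * Real.Gamma (j + 1/2) := by
      rw [← Real.Gamma_add_one (by positivity)]; congr 1; ring
    have hG : Real.Gamma (j + 1/2) ≠ 0 := (Real.Gamma_pos_of_pos (by positivity)).ne'
    simp only [← pow_mul, pow_zero, mul_one, integral_pow, Nat.factorial_zero, Nat.cast_one,
      Nat.cast_zero, add_zero, this]
    push_cast
    field_simp
    simp
  | succ n ih =>
    intro j
    have h1 : ∀ s ∈ Set.uIcc (0:ℝ) 1, HasDerivAt (fun s : ℝ => s ^ (2*j+1) * (1 - s^2)^(n+1))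
        ((2*j+1) * ((s^2)^j * (1 - s^2)^(n+1)) - (2*(n+1)) * ((s^2)^(j+1) * (1-s^2)^n)) s := by
      intro s _
      have := (hasDerivAt_pow (2*j+1) s).mul ((((hasDerivAt_pow 2 s).const_sub 1)).pow (n+1))
      refine (this.congr_deriv ?_)
      simp
      ring
    have h2 := intervalIntegral.integral_eq_sub_of_hasDerivAt h1
      (Continuous.intervalIntegrable (by fun_prop) _ _)
    rw [intervalIntegral.integral_sub (Continuous.intervalIntegrable (by fun_prop) _ _)
      (Continuous.intervalIntegrable (by fun_prop) _ _), intervalIntegral.integral_const_mul,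
      intervalIntegral.integral_const_mul, ih] at h2
    have e1 : Real.Gamma ((j+1:ℕ) + 1/2) = (j + 1/2) * Real.Gamma (j + 1/2) := by
      rw [← Real.Gamma_add_one (by positivity)]; congr 1; push_cast; ring
    have e2 : ((j+1:ℕ):ℝ) + n + 3/2 = j + (n+1:ℕ) + 3/2 := by push_cast; ring
    rw [e1, e2] at h2
    have h3 : (2 * (j:ℝ) + 1) ≠ 0 := by positivity
    have hG : Real.Gamma (j + (n+1:ℕ) + 3/2) ≠ 0 := (Real.Gamma_pos_of_pos (by positivity)).ne'
    rw [Nat.factorial_succ]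
    simp at h2
    apply mul_left_cancel₀ h3
    rw [sub_eq_zero] at h2
    push_cast at hG h2 ⊢
    rw [h2]
    field_simp

lemma sumGamma (k : ℕ) : ∑ j ∈ Finset.range (k+1), Real.Gamma (j + 1/2) / (2 * j.factorial) =
    Real.Gamma ((k+1:ℕ) + 1/2) / Real.Gamma (k+1:ℕ) := by
  induction k with
  | zero =>
    have : Real.Gamma (1 + 1/2) = (1/2) * Real.Gamma (1/2) := by
      rw [← Real.Gamma_add_one (by positivity)]; congr 1; ring
    simp at this ⊢
    rw [this]; ring
  | succ k ih =>
    have : Real.Gamma ((k+1+1:ℕ) + 1/2) = ((k+1:ℕ) + 1/2) * Real.Gamma ((k+1:ℕ) + 1/2) := by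
      rw [← Real.Gamma_add_one (by positivity)]; congr 1; push_cast; ring
    rw [Finset.sum_range_succ, ih, this]
    have g1 : Real.Gamma ((k+1:ℕ)) = k.factorial := by
      push_cast; exact Real.Gamma_nat_eq_factorial k
    have g2 : Real.Gamma ((k+1+1:ℕ)) = (k+1).factorial := by
      rw [Nat.cast_succ (k+1)]; exact Real.Gamma_nat_eq_factorial (k+1)
    rw [g1, g2, Nat.factorial_succ]
    push_cast
    field_simp

lemma integral_binTail_sq (k N : ℕ) (hk : 1 ≤ k) (hN : k ≤ N) :
    ∫ s in (0:ℝ)..1, binTail k N (s^2) = (Real.Gamma (k + 1/2) / Real.Gamma k) *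
            (Real.Gamma (N + 1) / Real.Gamma (N + 3/2)) := by
  obtain ⟨k, rfl⟩ := Nat.exists_eq_add_of_le' hk
  rw [← sumGamma, Finset.sum_mul]
  unfold binTail
  rw [intervalIntegral.integral_finsetSum
    (fun i _ => Continuous.intervalIntegrable (by fun_prop) _ _)]
  refine Finset.sum_congr rfl fun j hj => ?_
  have hj : j ≤ N := by have := Finset.mem_range.1 hj; omega
  simp_rw [mul_assoc]
  rw [intervalIntegral.integral_const_mul, betaSq, Real.Gamma_nat_eq_factorial,
    Nat.cast_choose ℝ hj]
  have : (j:ℝ) + (N - j : ℕ) + 3/2 = N + 3/2 := by rw [Nat.cast_sub hj]; ring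
  rw [this]
  field_simp

lemma integral_binTail_pi (k N : ℕ) (hk : 1 ≤ k) (hN : k ≤ N) :
    ∫ r in (0:ℝ)..(Real.sqrt Real.pi)⁻¹, binTail k N (Real.pi * r^2) =
      (Real.sqrt Real.pi)⁻¹ * (Real.Gamma (k + 1/2) / Real.Gamma k) *
            (Real.Gamma (N + 1) / Real.Gamma (N + 3/2)) := by
  have hs : Real.sqrt Real.pi ≠ 0 := (Real.sqrt_pos.2 Real.pi_pos).ne'
  have := intervalIntegral.integral_comp_mul_left (a := 0) (b := (Real.sqrt Real.pi)⁻¹)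
    (fun s => binTail k N (s^2)) hs
  simp only [mul_pow, Real.sq_sqrt Real.pi_pos.le] at this
  rw [this, mul_zero, mul_inv_cancel₀ hs, integral_binTail_sq k N hk hN, smul_eq_mul, mul_assoc]

lemma sorted_getD_le_iff (r : ℝ) : ∀ (l : List ℝ) (_ : l.Pairwise (· ≤ ·)) (i : ℕ)
    (_ : i < l.length), l.getD i 0 ≤ r ↔ i < l.countP (fun a => decide (a ≤ r)) := by
  intro l
  induction l with
  | nil => intro _ i hi; simp at hi
  | cons a l ih =>
    intro hl i hi
    rw [List.pairwise_cons] at hl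
    by_cases ha : a ≤ r
    · rw [List.countP_cons_of_pos (by simpa using ha)]
      cases i with
      | zero => simp [ha]
      | succ i =>
        rw [List.getD_cons_succ, ih hl.2 i (by simpa using hi)]
        omega
    · have h0 : (a :: l).countP (fun a => decide (a ≤ r)) = 0 := by
        rw [List.countP_eq_zero]
        intro b hb
        rcases List.mem_cons.1 hb with rfl | hb
        · simpa using ha
        · have := hl.1 b hb
          simp; linarith
      rw [h0]
      cases i with
      | zero => simpa using ha
      | succ i =>
        have hi' : i < l.length := by simpa using hi
        rw [List.getD_cons_succ, List.getD_eq_getElem _ _ hi']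
        have := hl.1 _ (List.getElem_mem hi')
        simp; linarith

lemma lt_kthVal_iff {N k : ℕ} (hk : 1 ≤ k) (hN : k ≤ N) (f : Fin N → ℝ) (r : ℝ) :
    r < kthVal k f ↔ (Finset.univ.filter fun i => f i ≤ r).card < k := by
  unfold kthVal
  rw [← not_le, sorted_getD_le_iff r _ (Multiset.pairwise_sort _ _) _ (by simp; omega)]
  rw [← Multiset.coe_countP, Multiset.sort_eq, Multiset.countP_map]
  have : (Multiset.filter (fun i => f i ≤ r) (Finset.univ : Finset (Fin N)).val).card =
    (Finset.univ.filter fun i => f i ≤ r).card := rfl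
  rw [this]
  omega

lemma kthVal_mem {N k : ℕ} (hk : 1 ≤ k) (hN : k ≤ N) (f : Fin N → ℝ) :
    ∃ i, kthVal k f = f i := by
  unfold kthVal
  have hl : k - 1 < (((Finset.univ : Finset (Fin N)).val.map f).sort (· ≤ ·)).length := by
    simp; omega
  rw [List.getD_eq_getElem _ _ hl]
  have := List.getElem_mem hl
  rw [Multiset.mem_sort, Multiset.mem_map] at this
  obtain ⟨i, _, hi⟩ := this
  exact ⟨i, hi.symm⟩

open Classical in
lemma cnt_set_eq {α : Type*} (A : Set α) (N k : ℕ) :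
    {ω : Fin N → α | (Finset.univ.filter fun i => ω i ∈ A).card < k} =
      ⋃ S ∈ (Finset.univ : Finset (Finset (Fin N))).filter (fun S => S.card < k),
        Set.univ.pi fun i => if i ∈ S then A else Aᶜ := by
  ext ω
  simp only [Set.mem_ofPred_eq, Set.mem_iUnion, Finset.mem_filter, Finset.mem_univ, true_and,
    Set.mem_pi, Set.mem_univ, true_implies, exists_prop]
  constructor
  · intro h
    refine ⟨_, h, fun i => ?_⟩
    by_cases hi : ω i ∈ A <;> simp [hi]
  · rintro ⟨S, hS, h⟩
    convert hS using 2
    ext i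
    have := h i
    by_cases hi : i ∈ S <;> simp_all

open Classical in
lemma meas_cnt {α : Type*} [MeasurableSpace α] {A : Set α} (hA : MeasurableSet A) (N k : ℕ) :
    MeasurableSet {ω : Fin N → α | (Finset.univ.filter fun i => ω i ∈ A).card < k} := by
  rw [cnt_set_eq]
  refine Finset.measurableSet_biUnion _ fun S _ => MeasurableSet.univ_pi fun i => ?_
  split_ifs
  · exact hA
  · exact hA.compl

open Classical in
lemma prob_cnt {α : Type*} [MeasurableSpace α] (μ : Measure α) [IsProbabilityMeasure μ]
    {A : Set α} (hA : MeasurableSet A) (N k : ℕ) :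
    (Measure.pi fun _ : Fin N => μ).real
      {ω : Fin N → α | (Finset.univ.filter fun i => ω i ∈ A).card < k} =
      binTail k N (μ.real A) := by
  rw [cnt_set_eq, measureReal_biUnion_finset]
  · have e : ∀ S : Finset (Fin N), (Measure.pi fun _ : Fin N => μ).real
        (Set.univ.pi fun i => if i ∈ S then A else Aᶜ) =
        (μ.real A) ^ S.card * (1 - μ.real A) ^ (N - S.card) := by
      intro S
      rw [measureReal_def, Measure.pi_pi, ENNReal.toReal_prod]
      have : ∀ i, (μ (if i ∈ S then A else Aᶜ)).toReal =
          if i ∈ S then μ.real A else 1 - μ.real A := by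
        intro i
        split_ifs
        · rfl
        · exact probReal_compl_eq_one_sub hA
      simp_rw [this]
      rw [Finset.prod_ite]
      simp only [Finset.prod_const]
      congr 2
      · congr 1; ext; simp
      · have : (Finset.univ.filter fun i => i ∉ S) = Sᶜ := by ext; simp
        rw [this, Finset.card_compl, Fintype.card_fin]
    simp_rw [e]
    unfold binTail
    rw [← Finset.sum_fiberwise_of_maps_to (t := Finset.range k) (g := Finset.card)
      (by intro S; simp)]
    refine Finset.sum_congr rfl fun j hj => ?_
    rw [Finset.sum_congr rfl (g := fun _ => (μ.real A) ^ j * (1 - μ.real A) ^ (N - j))]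
    · rw [Finset.sum_const, nsmul_eq_mul, mul_assoc]
      congr 2
      have : (Finset.filter (fun S : Finset (Fin N) => S.card = j)
        (Finset.univ.filter fun S => S.card < k)) = Finset.powersetCard j Finset.univ := by
        ext S
        simp only [Finset.mem_filter, Finset.mem_univ, true_and, Finset.mem_powersetCard,
          Finset.subset_univ]
        have := Finset.mem_range.1 hj
        omega
      rw [this, Finset.card_powersetCard, Finset.card_univ, Fintype.card_fin]
    · intro S hS
      rw [(Finset.mem_filter.1 hS).2]
  · intro S _ T _ hST
    rw [Function.onFun, Set.disjoint_left]
    intro ω h1 h2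
    apply hST
    ext i
    have h1 := h1 i (Set.mem_univ _)
    have h2 := h2 i (Set.mem_univ _)
    by_cases hi : i ∈ S <;> by_cases hi' : i ∈ T <;> simp_all
  · intro S _
    refine MeasurableSet.univ_pi fun i => ?_
    split_ifs
    · exact hA
    · exact hA.compl

open Classical in
lemma expectation_eq (x : Torus) (k N : ℕ) (hk : 1 ≤ k) (hN : k ≤ N) :
    ∃ g : ℝ → ℝ, Antitone g ∧
      (∀ t, g t = binTail k N (torusMeasure.real {y | dist x y ≤ t})) ∧
      (∫ ω : Fin N → Torus, kthVal k (fun i => dist x (ω i))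
            ∂(Measure.pi fun _ : Fin N => torusMeasure)) = ∫ t in (0:ℝ)..2, g t := by
  have hset : ∀ t : ℝ, {ω : Fin N → Torus | t < kthVal k (fun i => dist x (ω i))} =
      {ω : Fin N → Torus | (Finset.univ.filter fun i => ω i ∈ {y | dist x y ≤ t}).card < k} := by
    intro t
    ext ω
    rw [Set.mem_ofPred_eq, Set.mem_ofPred_eq, lt_kthVal_iff hk hN]
    simp only [Set.mem_ofPred_eq]
  have hmb : ∀ t : ℝ, MeasurableSet {y | dist x y ≤ t} := fun t =>
    measurableSet_le (measurable_distTorus x) measurable_const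
  have hmeas : Measurable fun ω : Fin N → Torus => kthVal k (fun i => dist x (ω i)) := by
    refine measurable_of_Ioi fun t => ?_
    have : (fun ω : Fin N → Torus => kthVal k (fun i => dist x (ω i))) ⁻¹' Set.Ioi t =
      {ω : Fin N → Torus | t < kthVal k (fun i => dist x (ω i))} := rfl
    rw [this, hset]
    exact meas_cnt (hmb t) N k
  have hb : ∀ ω : Fin N → Torus, 0 ≤ kthVal k (fun i => dist x (ω i)) ∧
      kthVal k (fun i => dist x (ω i)) ≤ 2 := by
    intro ω
    obtain ⟨i, hi⟩ := kthVal_mem hk hN (fun i => dist x (ω i))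
    rw [hi]
    exact ⟨dist_nonneg, dist_torus_le _ _⟩
  have hint : Integrable (fun ω : Fin N → Torus => kthVal k (fun i => dist x (ω i)))
      (Measure.pi fun _ : Fin N => torusMeasure) := by
    refine Integrable.of_bound hmeas.aestronglyMeasurable 2 (Eventually.of_forall fun ω => ?_)
    rw [Real.norm_of_nonneg (hb ω).1]
    exact (hb ω).2
  refine ⟨fun t => (Measure.pi fun _ : Fin N => torusMeasure).real
    {ω : Fin N → Torus | t < kthVal k (fun i => dist x (ω i))}, ?_, ?_, ?_⟩
  · intro s t hst
    refine measureReal_mono fun ω hω => ?_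
    exact lt_of_le_of_lt hst hω
  · intro t
    show (Measure.pi fun _ : Fin N => torusMeasure).real
      {ω : Fin N → Torus | t < kthVal k (fun i => dist x (ω i))} = _
    rw [hset, prob_cnt torusMeasure (hmb t) N k]
  · rw [hint.integral_eq_integral_meas_lt (Eventually.of_forall fun ω => (hb ω).1),
      intervalIntegral.integral_of_le (by norm_num)]
    refine (setIntegral_eq_of_subset_of_forall_diff_eq_zero measurableSet_Ioi
      Set.Ioc_subset_Ioi_self ?_)
    rintro t ⟨h1, h2⟩
    have : {ω : Fin N → Torus | t < kthVal k (fun i => dist x (ω i))} = ∅ := by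
      refine Set.eq_empty_of_forall_notMem fun ω hω => h2 ⟨h1, ?_⟩
      exact (le_of_lt hω).trans (hb ω).2
    rw [this, measureReal_empty]

/-- Fix a point `x` of the flat unit torus `T = ℝ²/ℤ²` and an integer `k ≥ 1`.
With `D_k(N)` the `k`-th smallest of the distances from `x` to `N` i.i.d. uniform sites
(product of Haar measures on `Fin N → T`), there exist `C > 0` and `ρ ∈ (0,1)` such that for
all `N ≥ k`:
`|E[D_k(N)] − (1/√π) (Γ(k+1/2)/Γ(k)) (Γ(N+1)/Γ(N+3/2))| ≤ C ρ^N`.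
In particular, on the flat torus the `k`- and `N`-dependences separate to all orders in `1/N`. -/
theorem torus_kth_nearest_distance (x : Torus) (k : ℕ) (hk : 1 ≤ k) :
    ∃ C > 0, ∃ ρ ∈ Set.Ioo (0:ℝ) 1, ∀ N : ℕ, k ≤ N →
      |(∫ ω : Fin N → Torus, kthVal k (fun i => dist x (ω i))
            ∂(Measure.pi fun _ : Fin N => torusMeasure)) -
          (Real.sqrt Real.pi)⁻¹ * (Real.Gamma (k + 1/2) / Real.Gamma k) *
            (Real.Gamma (N + 1) / Real.Gamma (N + 3/2))| ≤ C * ρ ^ N := by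

  refine ⟨2 * 2 ^ k, by positivity, 5/8, ⟨by norm_num, by norm_num⟩, fun N hN => ?_⟩
  obtain ⟨g, hg, hgF, hE⟩ := expectation_eq x k N hk hN
  rw [hE, ← integral_binTail_pi k N hk hN]
  set c := (Real.sqrt Real.pi)⁻¹ with hc
  have hpi := Real.pi_gt_d2
  have hpi' := Real.pi_lt_d2
  have hs1 : 1 ≤ Real.sqrt Real.pi := by rw [Real.one_le_sqrt]; linarith
  have hs2 : Real.sqrt Real.pi ≤ 2 := by rw [Real.sqrt_le_left (by norm_num)]; linarith
  have hc0 : 1/2 ≤ c := by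
    rw [hc, one_div]; exact inv_anti₀ (by linarith) hs2
  have hc1 : c ≤ 1 := inv_le_one_of_one_le₀ hs1
  have hcc : Real.pi * c ^ 2 = 1 := by
    rw [hc, inv_pow, Real.sq_sqrt Real.pi_pos.le, mul_inv_cancel₀ Real.pi_pos.ne']
  have hgi : ∀ a b, IntervalIntegrable g volume a b := fun a b => (hg.antitoneOn _).intervalIntegrable
  have hHi : ∀ a b, IntervalIntegrable (fun r => binTail k N (Real.pi * r^2)) volume a b :=
    fun a b => Continuous.intervalIntegrable (by unfold binTail; fun_prop) a b
  rw [← intervalIntegral.integral_add_adjacent_intervals (hgi 0 (1/2)) (hgi (1/2) 2),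
    ← intervalIntegral.integral_add_adjacent_intervals (hHi 0 (1/2)) (hHi (1/2) c)]
  have heq : ∫ t in (0:ℝ)..(1/2), g t = ∫ t in (0:ℝ)..(1/2), binTail k N (Real.pi * t^2) := by
    rw [intervalIntegral.integral_of_le (by norm_num), intervalIntegral.integral_of_le (by norm_num),
      integral_Ioc_eq_integral_Ioo, integral_Ioc_eq_integral_Ioo]
    refine setIntegral_congr_fun measurableSet_Ioo fun t ht => ?_
    simp only [hgF]
    rw [torusMeasure_ball x ht.1.le ht.2]
  have hF : ∀ t : ℝ, 1/2 ≤ t → 3/4 ≤ torusMeasure.real {y | dist x y ≤ t} := by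
    intro t ht
    have h1 : torusMeasure.real {y | dist x y ≤ 0.49} ≤ torusMeasure.real {y | dist x y ≤ t} := by
      refine measureReal_mono fun y hy => ?_
      have hy : dist x y ≤ 0.49 := hy
      show dist x y ≤ t
      linarith
    rw [torusMeasure_ball x (by norm_num) (by norm_num)] at h1
    linarith
  have b1 : ∀ t ∈ Set.Icc (1/2:ℝ) 2, 0 ≤ g t ∧ g t ≤ 2 ^ k * (5/8) ^ N := by
    intro t ht
    rw [hgF]
    have := hF t ht.1
    exact ⟨binTail_nonneg k N (by linarith) measureReal_le_one,
      binTail_le k N hN this measureReal_le_one⟩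
  have b2 : ∀ t ∈ Set.Icc (1/2:ℝ) c, 0 ≤ binTail k N (Real.pi * t^2) ∧
      binTail k N (Real.pi * t^2) ≤ 2 ^ k * (5/8) ^ N := by
    intro t ht
    have l : 3/4 ≤ Real.pi * t^2 := by
      have : 1/4 ≤ t^2 := by nlinarith [ht.1]
      nlinarith
    have u : Real.pi * t^2 ≤ 1 := by
      rw [← hcc]
      have : t^2 ≤ c^2 := pow_le_pow_left₀ (by linarith [ht.1]) ht.2 2
      exact mul_le_mul_of_nonneg_left this Real.pi_pos.le
    exact ⟨binTail_nonneg k N (by linarith) u, binTail_le k N hN l u⟩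
  have i1 : 0 ≤ ∫ t in (1/2:ℝ)..2, g t :=
    intervalIntegral.integral_nonneg (by norm_num) fun t ht => (b1 t ht).1
  have i2 : 0 ≤ ∫ t in (1/2:ℝ)..c, binTail k N (Real.pi * t^2) :=
    intervalIntegral.integral_nonneg hc0 fun t ht => (b2 t ht).1
  have i3 := intervalIntegral.integral_mono_on (by norm_num) (hgi (1/2) 2)
    intervalIntegrable_const fun t ht => (b1 t ht).2
  have i4 := intervalIntegral.integral_mono_on hc0 (hHi (1/2) c)
    intervalIntegrable_const fun t ht => (b2 t ht).2
  rw [intervalIntegral.integral_const, smul_eq_mul] at i3 i4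
  have hB : (0:ℝ) ≤ 2 ^ k * (5/8) ^ N := by positivity
  rw [heq, abs_le]
  constructor <;> nlinarith

end
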